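/- Let p be a prime and r ≥ 2 an integer, and consider the labeled family of 2 + p·(r−1) vectors in ℚ^r given by e_1, v = e_2 + ⋯ + e_r, and v_{k,ℓ} = k·e_1 + e_ℓ for 2 ≤ ℓ ≤ r and 0 ≤ k < p (with k regarded as a rational number), with i the label of e_1 and j the label of v. Then b_{ij} = (r−1)·p^{r−2}, b^{ij} = (r−1)·((p−1)/2)·p^{r−1}, b_i^j = p^{r−1}, and b_j^i = p^{r−1} − 1 + (r−1)·(r−2)·((p−1)/2)·p^{r−2}. Consequently, the α-ratio α = (b^{ij}·b_{ij})/(b_i^j·b_j^i) of this configuration converges to (r−1)²/(2 + (r−1)·(r−2)) as p → ∞. -/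

import Mathlib

/-- The index (label) type of the rational configuration: one label for `e₁`, one for
`v = e₂ + ⋯ + e_r`, and one for each vector `v_{k,ℓ} = k·e₁ + e_ℓ` with `ℓ ∈ {2, …, r}`
(encoded as a nonzero index of `Fin r`) and integer `0 ≤ k < p`. -/
abbrev QrpIndex (r p : ℕ) : Type :=
  Unit ⊕ Unit ⊕ ({l : Fin r // l.val ≠ 0} × Fin p)

/-- The vectors of the rational configuration in `ℚ^r`: the label `Sum.inl ()` carries
`e₁`, the label `Sum.inr (Sum.inl ())` carries `v = e₂ + ⋯ + e_r`, and the label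
`Sum.inr (Sum.inr (ℓ, k))` carries `v_{k,ℓ} = k·e₁ + e_ℓ`, with `k` regarded as a
rational number. -/
def qrpVec (r p : ℕ) : QrpIndex r p → (Fin r → ℚ)
  | Sum.inl _ => fun m => if m.val = 0 then 1 else 0
  | Sum.inr (Sum.inl _) => fun m => if m.val = 0 then 0 else 1
  | Sum.inr (Sum.inr lk) => fun m =>
      if m.val = 0 then ((lk.2 : ℕ) : ℚ) else if m = lk.1.1 then 1 else 0

/-- The label of the vector `e₁`. -/
def qrpI (r p : ℕ) : QrpIndex r p := Sum.inl ()

/-- The label of the vector `v = e₂ + ⋯ + e_r`. -/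
def qrpJ (r p : ℕ) : QrpIndex r p := Sum.inr (Sum.inl ())

/-- A finite set `s` of labels of a labeled family `w` of vectors forms a vector-space
basis if the family of vectors indexed by `s` is linearly independent and spans. -/
def FormsBasis (K : Type*) {ι : Type*} [Field K] {V : Type*} [AddCommGroup V]
    [Module K V] (w : ι → V) (s : Finset ι) : Prop :=
  LinearIndependent K (fun x : s => w x.val) ∧ Submodule.span K (w '' ↑s) = ⊤

/-- `b_{ij}(p)`: the number of `r`-element subsets of labels forming a basis of `ℚ^r`
and containing both the label `i` of `e₁` and the label `j` of `v`. -/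
noncomputable def qbij (r p : ℕ) : ℕ :=
  Nat.card {s : Finset (QrpIndex r p) //
    s.card = r ∧ FormsBasis ℚ (qrpVec r p) s ∧ qrpI r p ∈ s ∧ qrpJ r p ∈ s}

/-- `b^{ij}(p)`: the number of such bases containing neither `i` nor `j`. -/
noncomputable def qbnij (r p : ℕ) : ℕ :=
  Nat.card {s : Finset (QrpIndex r p) //
    s.card = r ∧ FormsBasis ℚ (qrpVec r p) s ∧ qrpI r p ∉ s ∧ qrpJ r p ∉ s}

/-- `b_i^j(p)`: the number of such bases containing `i` but not `j`. -/
noncomputable def qbinj (r p : ℕ) : ℕ :=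
  Nat.card {s : Finset (QrpIndex r p) //
    s.card = r ∧ FormsBasis ℚ (qrpVec r p) s ∧ qrpI r p ∈ s ∧ qrpJ r p ∉ s}

/-- `b_j^i(p)`: the number of such bases containing `j` but not `i`. -/
noncomputable def qbjni (r p : ℕ) : ℕ :=
  Nat.card {s : Finset (QrpIndex r p) //
    s.card = r ∧ FormsBasis ℚ (qrpVec r p) s ∧ qrpI r p ∉ s ∧ qrpJ r p ∈ s}

/-- A set of `r` labels forms a basis of `ℚ^r` iff no nonzero vector is orthogonal to all of its
vectors. -/
theorem formsBasis_iff_forall_dotProduct {r : ℕ} {ι : Type*} (w : ι → Fin r → ℚ) (s : Finset ι)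
    (hs : s.card = r) :
    FormsBasis ℚ w s ↔ ∀ a : Fin r → ℚ, (∀ x ∈ s, a ⬝ᵥ w x = 0) → a = 0 := by
  have himage : Set.range (fun x : s => w x.val) = w '' ↑s := by
    ext y; simp
  constructor
  · rintro ⟨-, hspan⟩ a ha
    have hle : Submodule.span ℚ (w '' ↑s) ≤ LinearMap.ker (dotProductBilin ℚ ℚ a) := by
      rw [Submodule.span_le]
      rintro _ ⟨x, hx, rfl⟩
      exact ha x hx
    rw [hspan] at hle
    have := hle (Submodule.mem_top (x := a))
    exact dotProduct_self_eq_zero.mp this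
  · intro h
    have hspan : Submodule.span ℚ (w '' ↑s) = ⊤ := by
      by_contra hne
      obtain ⟨f, hf, hle⟩ := Submodule.exists_le_ker_of_lt_top _ (lt_top_iff_ne_top.mpr hne)
      apply hf
      have hdot (v : Fin r → ℚ) : f v = (fun i => f (Pi.single i 1)) ⬝ᵥ v := by
        rw [LinearMap.pi_apply_eq_sum_univ f v]
        simp only [dotProduct, smul_eq_mul]
        refine Finset.sum_congr rfl fun i _ => ?_
        rw [mul_comm]
        congr 2
        ext j
        simp [Pi.single_apply, eq_comm]
      have h0 := h (fun i => f (Pi.single i 1)) fun x hx => by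
        rw [← hdot]
        exact hle (Submodule.subset_span ⟨x, hx, rfl⟩)
      ext i
      simpa using congrFun h0 i
    refine ⟨linearIndependent_of_top_le_span_of_card_eq_finrank ?_ ?_, hspan⟩
    · rw [himage, hspan]
    · simp [hs]

section Profiles

variable {L K : Type*} [Fintype L] [DecidableEq L] [Fintype K] [DecidableEq K]

/-- The set of labels assembled from its parts in the three summands, the last part being given
by its fibres over `L`. -/
def labelSet (A B : Finset Unit) (f : L → Finset K) : Finset (Unit ⊕ Unit ⊕ (L × K)) :=
  A.disjSum (B.disjSum (Finset.univ.filter fun x : L × K => x.2 ∈ f x.1))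

omit [DecidableEq L] in
theorem card_labelSet (A B : Finset Unit) (f : L → Finset K) :
    (labelSet A B f).card = A.card + (B.card + ∑ l, (f l).card) := by
  simp only [labelSet, Finset.card_disjSum, Finset.card_filter, Fintype.sum_prod_type]
  simp

omit [DecidableEq L] in
theorem labelSet_injective (A B : Finset Unit) :
    Function.Injective (labelSet A B : (L → Finset K) → _) := by
  intro f g h
  ext l k
  have := congrArg (fun s => Sum.inr (Sum.inr (l, k)) ∈ s) h
  simpa [labelSet] using this

theorem exists_labelSet_eq (A B : Finset Unit) (s : Finset (Unit ⊕ Unit ⊕ (L × K)))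
    (hA : Sum.inl () ∈ s ↔ () ∈ A) (hB : Sum.inr (Sum.inl ()) ∈ s ↔ () ∈ B) :
    ∃ f : L → Finset K, labelSet A B f = s := by
  refine ⟨fun l => Finset.univ.filter fun k => Sum.inr (Sum.inr (l, k)) ∈ s, ?_⟩
  ext (⟨⟩ | ⟨⟨⟩⟩ | ⟨l, k⟩) <;> simp [labelSet, hA, hB]

theorem natCard_labelSet (A B : Finset Unit) (P : Finset (Unit ⊕ Unit ⊕ (L × K)) → Prop)
    (Q : (L → Finset K) → Prop) [DecidablePred Q]
    (hP : ∀ s, P s → (Sum.inl () ∈ s ↔ () ∈ A) ∧ (Sum.inr (Sum.inl ()) ∈ s ↔ () ∈ B))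
    (hPQ : ∀ f, P (labelSet A B f) ↔ Q f) :
    Nat.card {s // P s} = (Finset.univ.filter Q).card := by
  rw [← Fintype.card_subtype, ← Nat.card_eq_fintype_card]
  symm
  refine Nat.card_eq_of_bijective (fun f : {f // Q f} =>
    (⟨labelSet A B f.1, (hPQ _).mpr f.2⟩ : {s // P s})) ⟨fun f g h => ?_, fun s => ?_⟩
  · exact Subtype.ext (labelSet_injective A B (congrArg Subtype.val h))
  · obtain ⟨f, hf⟩ := exists_labelSet_eq A B s.1 (hP _ s.2).1 (hP _ s.2).2
    exact ⟨⟨f, (hPQ f).mp (hf ▸ s.2)⟩, Subtype.ext hf⟩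

omit [DecidableEq K] in
theorem card_filter_profile (c : L → ℕ) :
    (Finset.univ.filter fun f : L → Finset K => (fun l => (f l).card) = c).card =
      ∏ l, (Fintype.card K).choose (c l) := by
  have : (Finset.univ.filter fun f : L → Finset K => (fun l => (f l).card) = c) =
      Fintype.piFinset fun l => Finset.powersetCard (c l) Finset.univ := by
    ext f
    simp [Fintype.mem_piFinset, funext_iff]
  simp [this, Fintype.card_piFinset]

theorem card_filter_of_iff_exists_profile {X : Type*} {S : Finset X} {c : X → L → ℕ}
    (hc : Set.InjOn c S) (Q : (L → Finset K) → Prop) {_ : DecidablePred Q}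
    (hQ : ∀ f, Q f ↔ ∃ x ∈ S, (fun l => (f l).card) = c x) :
    (Finset.univ.filter Q).card = ∑ x ∈ S, ∏ l, (Fintype.card K).choose (c x l) := by
  have : Finset.univ.filter Q =
      S.biUnion fun x => Finset.univ.filter fun f : L → Finset K =>
        (fun l => (f l).card) = c x := by
    ext f
    simp [hQ]
  rw [this, Finset.card_biUnion]
  · simp only [card_filter_profile]
  · intro x hx y hy hxy
    refine Finset.disjoint_left.mpr fun f hf hf' => ?_
    simp only [Finset.mem_filter, Finset.mem_univ, true_and] at hf hf'
    exact hxy (hc hx hy (hf.symm.trans hf'))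

theorem prod_choose_update (q : ℕ) (l₀ : L) (v : ℕ) :
    ∏ l, q.choose (Function.update (1 : L → ℕ) l₀ v l) =
      q.choose v * q ^ (Fintype.card L - 1) := by
  rw [← Finset.mul_prod_erase _ _ (Finset.mem_univ l₀), Function.update_self]
  congr 1
  rw [Finset.prod_congr rfl (g := fun _ => q)]
  · simp [Finset.card_erase_of_mem]
  · intro l hl
    simp [Function.update_of_ne (Finset.ne_of_mem_erase hl)]

theorem prod_choose_update_update (q : ℕ) {l₀ l₁ : L} (h : l₀ ≠ l₁) (v w : ℕ) :
    ∏ l, q.choose (Function.update (Function.update (1 : L → ℕ) l₀ v) l₁ w l) =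
      q.choose w * (q.choose v * q ^ (Fintype.card L - 2)) := by
  rw [← Finset.mul_prod_erase _ _ (Finset.mem_univ l₁), Function.update_self,
    ← Finset.mul_prod_erase _ _ (Finset.mem_erase.mpr ⟨h, Finset.mem_univ l₀⟩),
    Function.update_of_ne h, Function.update_self]
  congr 2
  rw [Finset.prod_congr rfl (g := fun _ => q)]
  · rw [Finset.prod_const, Finset.card_erase_of_mem (by simp [h]),
      Finset.card_erase_of_mem (Finset.mem_univ _), Finset.card_univ, Nat.sub_sub]
  · intro l hl
    simp only [Finset.mem_erase, Finset.mem_univ, and_true] at hl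
    simp [Function.update_of_ne hl.1, Function.update_of_ne hl.2]

omit [Fintype L] in
theorem update_injective_of_ne {v : ℕ} (hv : v ≠ 1) :
    Function.Injective fun l₀ : L => Function.update (1 : L → ℕ) l₀ v := by
  intro a b h
  by_contra hab
  have := congrFun h a
  simp [Function.update_of_ne hab, hv] at this

theorem update_update_injOn :
    Set.InjOn (fun x : L × L => Function.update (Function.update (1 : L → ℕ) x.1 2) x.2 0)
      (Finset.univ.offDiag : Finset (L × L)) := by
  rintro ⟨a, b⟩ hab ⟨c, d⟩ hcd h
  simp only [Finset.coe_offDiag, Set.mem_offDiag, Finset.coe_univ, Set.mem_univ, true_and,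
    ne_eq] at hab hcd
  have hb := congrFun h b
  have ha := congrFun h a
  simp only [Function.update_apply, Pi.one_apply] at ha hb
  grind

theorem sum_update_add (c : L → ℕ) (l : L) (v : ℕ) :
    ∑ i, Function.update c l v i + c l = ∑ i, c i + v := by
  rw [Finset.sum_update_of_mem (Finset.mem_univ l), ← Finset.add_sum_erase _ c (Finset.mem_univ l),
    Finset.sdiff_singleton_eq_erase]
  ring

omit [DecidableEq L] in
theorem eq_one_of_sum_eq_card {c : L → ℕ} (h : ∀ l, 1 ≤ c l) (hc : ∑ l, c l = Fintype.card L) :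
    c = 1 := by
  have := (Finset.sum_eq_sum_iff_of_le (s := Finset.univ) (f := fun _ : L => 1) (g := c)
    fun l _ => h l).mp (by simp [hc])
  ext l
  exact (this l (Finset.mem_univ l)).symm

theorem exists_eq_update_two {c : L → ℕ} (h : ∀ l, 1 ≤ c l)
    (hc : ∑ l, c l = Fintype.card L + 1) : ∃ l₀, c = Function.update (1 : L → ℕ) l₀ 2 := by
  obtain ⟨l₀, h₀⟩ : ∃ l₀, 2 ≤ c l₀ := by
    by_contra! hlt
    have : ∑ l, c l ≤ ∑ _l : L, 1 := Finset.sum_le_sum fun l _ => by have := hlt l; omega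
    simp only [Finset.sum_const, Finset.card_univ, smul_eq_mul, mul_one] at this
    omega
  have hsum := sum_update_add c l₀ (c l₀ - 1)
  have hone := eq_one_of_sum_eq_card (c := Function.update c l₀ (c l₀ - 1))
    (fun l => by
      have := h l
      rw [Function.update_apply]
      split_ifs <;> omega) (by omega)
  refine ⟨l₀, ?_⟩
  ext l
  have := congrFun hone l
  simp only [Function.update_apply, Pi.one_apply] at this ⊢
  split_ifs at this ⊢ with hl
  · subst hl; omega
  · exact this

omit [Fintype L] in
theorem one_le_update_one {c : L → ℕ} (h : ∀ l l', c l = 0 → c l' = 0 → l = l') {l₁ : L}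
    (h₁ : c l₁ = 0) (l : L) : 1 ≤ Function.update c l₁ 1 l := by
  rw [Function.update_apply]
  split_ifs with hl
  · exact le_rfl
  · exact Nat.one_le_iff_ne_zero.mpr fun h0 => hl (h l l₁ h0 h₁)

theorem exists_eq_update_zero {c : L → ℕ} (h : ∀ l l', c l = 0 → c l' = 0 → l = l')
    (hc : ∑ l, c l + 1 = Fintype.card L) : ∃ l₁, c = Function.update (1 : L → ℕ) l₁ 0 := by
  obtain ⟨l₁, h₁⟩ : ∃ l₁, c l₁ = 0 := by
    by_contra! hne
    have : ∑ _l : L, 1 ≤ ∑ l, c l :=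
      Finset.sum_le_sum fun l _ => Nat.one_le_iff_ne_zero.mpr (hne l)
    simp only [Finset.sum_const, Finset.card_univ, smul_eq_mul, mul_one] at this
    omega
  have hsum := sum_update_add c l₁ 1
  have hone := eq_one_of_sum_eq_card (one_le_update_one h h₁) (by omega)
  exact ⟨l₁, by rw [← hone, Function.update_idem, ← h₁, Function.update_eq_self]⟩

theorem eq_one_or_exists_eq_update_update {c : L → ℕ} (h : ∀ l l', c l = 0 → c l' = 0 → l = l')
    (hc : ∑ l, c l = Fintype.card L) :
    c = 1 ∨ ∃ x ∈ (Finset.univ.offDiag : Finset (L × L)),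
      c = Function.update (Function.update (1 : L → ℕ) x.1 2) x.2 0 := by
  by_cases hne : ∀ l, 1 ≤ c l
  · exact Or.inl (eq_one_of_sum_eq_card hne hc)
  · push Not at hne
    obtain ⟨l₁, h₁⟩ := hne
    rw [Nat.lt_one_iff] at h₁
    have hsum := sum_update_add c l₁ 1
    obtain ⟨l₀, h₀⟩ := exists_eq_update_two (one_le_update_one h h₁) (by omega)
    have hl : l₀ ≠ l₁ := by
      rintro rfl
      simpa using congrFun h₀ l₀
    exact Or.inr ⟨(l₀, l₁), by simpa using hl,
      by rw [← h₀, Function.update_idem, ← h₁, Function.update_eq_self]⟩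

end Profiles

section Separation

variable {L : Type*} [Fintype L] {p : ℕ}

/-- Only the zero functional on `ℚ × ℚ^L` vanishes on `(1, 0)` (if `A`), on `(0, (1, …, 1))`
(if `B`), and on all `(k, e_l)` with `k ∈ f l`. -/
def Separates (A B : Prop) (f : L → Finset (Fin p)) : Prop :=
  ∀ (x : ℚ) (b : L → ℚ), (A → x = 0) → (B → ∑ l, b l = 0) →
    (∀ l, ∀ k ∈ f l, ((k : ℕ) : ℚ) * x + b l = 0) → x = 0 ∧ b = 0

theorem formsBasis_labelSet {r : ℕ} (hr : 2 ≤ r) (A B : Finset Unit)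
    (f : {l : Fin r // l.val ≠ 0} → Finset (Fin p)) (hcard : (labelSet A B f).card = r) :
    FormsBasis ℚ (qrpVec r p) (labelSet A B f) ↔ Separates (() ∈ A) (() ∈ B) f := by
  have hz (m : Fin r) : m.val = 0 ↔ m = ⟨0, by omega⟩ := by simp [Fin.ext_iff]
  have hI (a : Fin r → ℚ) : a ⬝ᵥ qrpVec r p (Sum.inl ()) = a ⟨0, by omega⟩ := by
    simp [dotProduct, qrpVec, hz]
  have hJ (a : Fin r → ℚ) : a ⬝ᵥ qrpVec r p (Sum.inr (Sum.inl ())) =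
      ∑ l : {l : Fin r // l.val ≠ 0}, a l := by
    simp only [dotProduct, qrpVec, mul_ite, mul_zero, mul_one]
    rw [← Finset.sum_subtype (Finset.univ.filter fun l : Fin r => l.val ≠ 0) (by simp),
      Finset.sum_filter]
    exact Finset.sum_congr rfl fun m _ => by split_ifs <;> simp_all
  have hV (a : Fin r → ℚ) (l : {l : Fin r // l.val ≠ 0}) (k : Fin p) :
      a ⬝ᵥ qrpVec r p (Sum.inr (Sum.inr (l, k))) = ((k : ℕ) : ℚ) * a ⟨0, by omega⟩ + a l := by
    have hl : l.1 ≠ ⟨0, by omega⟩ := fun h => l.2 ((hz _).mpr h)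
    have hsplit (m : Fin r) : a m * qrpVec r p (Sum.inr (Sum.inr (l, k))) m =
        (if m = ⟨0, by omega⟩ then ((k : ℕ) : ℚ) * a m else 0) + if m = l.1 then a m else 0 := by
      simp only [qrpVec, hz]
      split_ifs with h1 h2
      · exact absurd (h2.symm.trans h1) hl
      all_goals ring
    simp only [dotProduct, hsplit, Finset.sum_add_distrib]
    simp
  rw [formsBasis_iff_forall_dotProduct _ _ hcard]
  have hmem (a : Fin r → ℚ) :
      (∀ x ∈ labelSet A B f, a ⬝ᵥ qrpVec r p x = 0) ↔
        (() ∈ A → a ⟨0, by omega⟩ = 0) ∧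
        (() ∈ B → ∑ l : {l : Fin r // l.val ≠ 0}, a l = 0) ∧
        ∀ l, ∀ k ∈ f l, ((k : ℕ) : ℚ) * a ⟨0, by omega⟩ + a l.1 = 0 := by
    simp only [Sum.forall, labelSet, Finset.inl_mem_disjSum, Finset.inr_mem_disjSum,
      Finset.mem_filter, Finset.mem_univ, true_and, Prod.forall, hV, Unique.forall_iff]
    exact and_congr (by rw [← hI a]) (and_congr_left' (by rw [← hJ a]))
  simp only [hmem]
  constructor
  · intro h x b hA hB hf
    let a : Fin r → ℚ := fun m => if hm : m.val ≠ 0 then b ⟨m, hm⟩ else x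
    have ha0 : a ⟨0, by omega⟩ = x := by simp [a]
    have hab (l : {l : Fin r // l.val ≠ 0}) : a l = b l := by simp [a, l.2]
    have h0 : a = 0 := h a ⟨by rwa [ha0], by simpa only [hab] using hB,
      by simpa only [hab, ha0] using hf⟩
    refine ⟨by rw [← ha0, h0]; rfl, ?_⟩
    ext l
    rw [← hab, h0]
    rfl
  · rintro h a ⟨hA, hB, hf⟩
    obtain ⟨h0, hb⟩ := h (a ⟨0, by omega⟩) (fun l => a l.1) hA hB hf
    ext m
    by_cases hm : m.val = 0
    · rw [(hz m).mp hm, h0]; rfl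
    · exact congrFun hb ⟨m, hm⟩

variable [DecidableEq L]

theorem Separates.nonempty {A B : Prop} {f : L → Finset (Fin p)} (h : Separates A B f)
    (hB : ¬ B) (l : L) : 1 ≤ (f l).card := by
  rw [Nat.one_le_iff_ne_zero, Finset.card_ne_zero, Finset.nonempty_iff_ne_empty]
  intro hl
  have := (h 0 (Pi.single l 1) (fun _ => rfl) (fun hB' => absurd hB' hB) fun l' k hk => by
    have : l' ≠ l := by rintro rfl; simp [hl] at hk
    simp [this]).2
  simpa using congrFun this l

theorem Separates.empty_unique {A B : Prop} {f : L → Finset (Fin p)} (h : Separates A B f)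
    (l l' : L) (hl : (f l).card = 0) (hl' : (f l').card = 0) : l = l' := by
  rw [Finset.card_eq_zero] at hl hl'
  by_contra hne
  have := (h 0 (Pi.single l 1 - Pi.single l' 1) (fun _ => rfl) (fun _ => by simp)
    fun i k hk => by
      have h1 : i ≠ l := by rintro rfl; simp [hl] at hk
      have h2 : i ≠ l' := by rintro rfl; simp [hl'] at hk
      simp [h1, h2]).2
  simpa [hne] using congrFun this l

theorem separates_true_false_iff {f : L → Finset (Fin p)}
    (hf : ∑ l, (f l).card = Fintype.card L) :
    Separates True False f ↔ (fun l => (f l).card) = 1 := by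
  refine ⟨fun h => eq_one_of_sum_eq_card (h.nonempty not_false) hf, fun h x b hx _ hb => ?_⟩
  obtain rfl := hx trivial
  refine ⟨rfl, funext fun l => ?_⟩
  obtain ⟨k, hk⟩ := Finset.card_eq_one.mp (congrFun h l)
  simpa using hb l k (by simp [hk])

theorem separates_true_true_iff {f : L → Finset (Fin p)}
    (hf : ∑ l, (f l).card + 1 = Fintype.card L) :
    Separates True True f ↔ ∃ l₁, (fun l => (f l).card) = Function.update (1 : L → ℕ) l₁ 0 := by
  refine ⟨fun h => exists_eq_update_zero h.empty_unique hf, ?_⟩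
  rintro ⟨l₁, h⟩ x b hx hsum hb
  obtain rfl := hx trivial
  have hne (l : L) (hl : l ≠ l₁) : b l = 0 := by
    obtain ⟨k, hk⟩ := Finset.card_eq_one.mp
      ((congrFun h l).trans (by simp [Function.update_of_ne hl]))
    simpa using hb l k (by simp [hk])
  refine ⟨rfl, funext fun l => ?_⟩
  by_cases hl : l = l₁
  · rw [hl]
    exact (Fintype.sum_eq_single l₁ hne).symm.trans (hsum trivial)
  · exact hne l hl

theorem eq_zero_of_card_eq_two {s : Finset (Fin p)} (hs : s.card = 2) {x y : ℚ}
    (h : ∀ k ∈ s, ((k : ℕ) : ℚ) * x + y = 0) : x = 0 := by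
  obtain ⟨k, k', hne, rfl⟩ := Finset.card_eq_two.mp hs
  have h1 := h k (by simp)
  have h2 := h k' (by simp)
  have hsub : ((k : ℕ) : ℚ) - ((k' : ℕ) : ℚ) ≠ 0 := by
    rw [sub_ne_zero]
    exact_mod_cast fun h => hne (Fin.ext h)
  exact (mul_eq_zero.mp (by linear_combination h1 - h2 :
    (((k : ℕ) : ℚ) - ((k' : ℕ) : ℚ)) * x = 0)).resolve_left hsub

theorem separates_false_false_iff {f : L → Finset (Fin p)}
    (hf : ∑ l, (f l).card = Fintype.card L + 1) :
    Separates False False f ↔ ∃ l₀, (fun l => (f l).card) = Function.update (1 : L → ℕ) l₀ 2 := by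
  refine ⟨fun h => exists_eq_update_two (h.nonempty not_false) hf, ?_⟩
  rintro ⟨l₀, h⟩ x b - - hb
  obtain rfl : x = 0 :=
    eq_zero_of_card_eq_two ((congrFun h l₀).trans (by simp)) (hb l₀)
  refine ⟨rfl, funext fun l => ?_⟩
  obtain ⟨k, hk⟩ : (f l).Nonempty := by
    rw [← Finset.card_ne_zero, congrFun h l, Function.update_apply]
    split_ifs <;> simp
  simpa using hb l k hk

omit [DecidableEq L] in
theorem separates_false_true_of_card_eq_one {f : L → Finset (Fin p)}
    (hf : (fun l => (f l).card) = 1) :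
    Separates False True f ↔ ∃ l, ∃ k ∈ f l, k.val ≠ 0 := by
  choose g hg using fun l => Finset.card_eq_one.mp (congrFun hf l)
  simp only [Separates, hg, Finset.mem_singleton, forall_eq, exists_eq_left]
  constructor
  · intro h
    by_contra! h0
    exact one_ne_zero (h 1 0 not_false.elim (by simp) (by simp [h0])).1
  · rintro ⟨l, hl⟩ x b - hsum hb
    have hbx (l : L) : b l = -((g l : ℕ) * x) := by linarith [hb l]
    have hx : (∑ l, ((g l : ℕ) : ℚ)) * x = 0 := by
      rw [← neg_eq_zero, Finset.sum_mul, ← Finset.sum_neg_distrib, ← hsum trivial]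
      exact Finset.sum_congr rfl fun l _ => (hbx l).symm
    have hpos : (∑ l, ((g l : ℕ) : ℚ)) ≠ 0 := by
      refine (Finset.sum_pos' (fun l _ => by positivity) ⟨l, Finset.mem_univ l, ?_⟩).ne'
      exact_mod_cast Nat.pos_of_ne_zero hl
    obtain rfl := (mul_eq_zero.mp hx).resolve_left hpos
    exact ⟨rfl, funext fun l => by simp [hbx]⟩

theorem separates_false_true_iff {f : L → Finset (Fin p)}
    (hf : ∑ l, (f l).card = Fintype.card L) :
    Separates False True f ↔
      ((fun l => (f l).card) = 1 ∧ ∃ l, ∃ k ∈ f l, k.val ≠ 0) ∨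
      ∃ x ∈ (Finset.univ.offDiag : Finset (L × L)),
        (fun l => (f l).card) = Function.update (Function.update (1 : L → ℕ) x.1 2) x.2 0 := by
  constructor
  · intro h
    refine (eq_one_or_exists_eq_update_update h.empty_unique hf).imp_left fun h1 => ⟨h1, ?_⟩
    exact (separates_false_true_of_card_eq_one h1).mp h
  · rintro (⟨h1, h⟩ | ⟨⟨l₀, l₁⟩, hx, h⟩)
    · exact (separates_false_true_of_card_eq_one h1).mpr h
    · intro x b _ hsum hb
      have hl : l₀ ≠ l₁ := by simpa using hx
      obtain rfl : x = 0 :=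
        eq_zero_of_card_eq_two ((congrFun h l₀).trans (by simp [Function.update_of_ne hl]))
          (hb l₀)
      have hne (l : L) (hl : l ≠ l₁) : b l = 0 := by
        obtain ⟨k, hk⟩ : (f l).Nonempty := by
          rw [← Finset.card_ne_zero, congrFun h l, Function.update_of_ne hl,
            Function.update_apply]
          split_ifs <;> simp
        simpa using hb l k hk
      refine ⟨rfl, funext fun l => ?_⟩
      by_cases hl : l = l₁
      · rw [hl]
        exact (Fintype.sum_eq_single l₁ hne).symm.trans (hsum trivial)
      · exact hne l hl

end Separation

theorem card_nonzero_fin {r : ℕ} (hr : 2 ≤ r) :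
    Fintype.card {l : Fin r // l.val ≠ 0} = r - 1 := by
  obtain ⟨n, rfl⟩ : ∃ n, r = n + 1 := ⟨r - 1, by omega⟩
  have (l : Fin (n + 1)) : l.val ≠ 0 ↔ ¬ l = 0 := by rw [Fin.ext_iff]; rfl
  rw [Fintype.card_congr (Equiv.subtypeEquivRight this), Fintype.card_subtype_compl]
  simp

theorem natCard_bases {r : ℕ} (hr : 2 ≤ r) (p : ℕ) (A B : Finset Unit)
    (P : Finset (QrpIndex r p) → Prop)
    (Q : ({l : Fin r // l.val ≠ 0} → Finset (Fin p)) → Prop) [DecidablePred Q]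
    (hP : ∀ s, P s ↔ (Sum.inl () ∈ s ↔ () ∈ A) ∧ (Sum.inr (Sum.inl ()) ∈ s ↔ () ∈ B))
    (hQ : ∀ f, Q f ↔ A.card + (B.card + ∑ l, (f l).card) = r ∧ Separates (() ∈ A) (() ∈ B) f) :
    Nat.card {s : Finset (QrpIndex r p) // s.card = r ∧ FormsBasis ℚ (qrpVec r p) s ∧ P s} =
      (Finset.univ.filter Q).card := by
  refine natCard_labelSet A B _ Q (fun s hs => (hP s).mp hs.2.2) fun f => ?_
  have hPf : P (labelSet A B f) := (hP _).mpr (by simp [labelSet])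
  rw [hQ, ← card_labelSet]
  constructor
  · rintro ⟨h, hb, -⟩
    exact ⟨h, (formsBasis_labelSet hr A B f h).mp hb⟩
  · rintro ⟨h, hs⟩
    exact ⟨h, (formsBasis_labelSet hr A B f h).mpr hs, hPf⟩

theorem qbij_eq {r : ℕ} (hr : 2 ≤ r) (p : ℕ) : qbij r p = (r - 1) * p ^ (r - 2) := by
  have hL := card_nonzero_fin hr
  have := natCard_bases hr p {()} {()} (fun s => qrpI r p ∈ s ∧ qrpJ r p ∈ s)
    (fun f => ∃ l₁ ∈ Finset.univ, (fun l => (f l).card) =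
      Function.update (1 : {l : Fin r // l.val ≠ 0} → ℕ) l₁ 0)
    (by simp [qrpI, qrpJ]) (fun f => by
      simp only [Finset.card_singleton, Finset.mem_singleton, Finset.mem_univ, true_and]
      constructor
      · rintro ⟨l₁, h⟩
        have hsum := sum_update_add (1 : {l : Fin r // l.val ≠ 0} → ℕ) l₁ 0
        have hf : ∑ l, (f l).card =
            ∑ l, Function.update (1 : {l : Fin r // l.val ≠ 0} → ℕ) l₁ 0 l :=
          Finset.sum_congr rfl fun l _ => congrFun h l
        simp only [Pi.one_apply, Finset.sum_const, Finset.card_univ, smul_eq_mul] at hsum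
        exact ⟨by omega, (separates_true_true_iff (by omega)).mpr ⟨l₁, h⟩⟩
      · rintro ⟨hc, h⟩
        exact (separates_true_true_iff (by omega)).mp h)
  rw [qbij, this, card_filter_of_iff_exists_profile
    (update_injective_of_ne zero_ne_one).injOn _ fun _ => Iff.rfl]
  simp [prod_choose_update, hL, Nat.sub_sub]

theorem qbinj_eq {r : ℕ} (hr : 2 ≤ r) (p : ℕ) : qbinj r p = p ^ (r - 1) := by
  have hL := card_nonzero_fin hr
  have := natCard_bases hr p {()} ∅ (fun s => qrpI r p ∈ s ∧ qrpJ r p ∉ s)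
    (fun f => (fun l => (f l).card) = 1)
    (by simp [qrpI, qrpJ]) (fun f => by
      simp only [Finset.card_singleton, Finset.card_empty, Finset.mem_singleton,
        Finset.notMem_empty]
      constructor
      · intro h
        have hsum : ∑ l, (f l).card = Fintype.card {l : Fin r // l.val ≠ 0} := by
          simp [fun l => congrFun h l]
        exact ⟨by omega, (separates_true_false_iff hsum).mpr h⟩
      · rintro ⟨hc, h⟩
        exact (separates_true_false_iff (by omega)).mp h)
  rw [qbinj, this, card_filter_profile]
  simp [hL]

theorem qbnij_eq {r : ℕ} (hr : 2 ≤ r) (p : ℕ) :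
    qbnij r p = (r - 1) * (p.choose 2 * p ^ (r - 2)) := by
  have hL := card_nonzero_fin hr
  have := natCard_bases hr p ∅ ∅ (fun s => qrpI r p ∉ s ∧ qrpJ r p ∉ s)
    (fun f => ∃ l₀ ∈ Finset.univ, (fun l => (f l).card) =
      Function.update (1 : {l : Fin r // l.val ≠ 0} → ℕ) l₀ 2)
    (by simp [qrpI, qrpJ]) (fun f => by
      simp only [Finset.card_empty, Finset.notMem_empty, Finset.mem_univ, true_and]
      constructor
      · rintro ⟨l₀, h⟩
        have hsum := sum_update_add (1 : {l : Fin r // l.val ≠ 0} → ℕ) l₀ 2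
        have hf : ∑ l, (f l).card =
            ∑ l, Function.update (1 : {l : Fin r // l.val ≠ 0} → ℕ) l₀ 2 l :=
          Finset.sum_congr rfl fun l _ => congrFun h l
        simp only [Pi.one_apply, Finset.sum_const, Finset.card_univ, smul_eq_mul] at hsum
        exact ⟨by omega, (separates_false_false_iff (by omega)).mpr ⟨l₀, h⟩⟩
      · rintro ⟨hc, h⟩
        exact (separates_false_false_iff (by omega)).mp h)
  rw [qbnij, this, card_filter_of_iff_exists_profile
    (update_injective_of_ne (by decide)).injOn _ fun _ => Iff.rfl]
  simp [prod_choose_update, hL, Nat.sub_sub]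

theorem card_filter_profile_one_ne_zero {L : Type*} [Fintype L] [DecidableEq L] {p : ℕ}
    (hp : 0 < p) :
    (Finset.univ.filter fun f : L → Finset (Fin p) =>
      (fun l => (f l).card) = 1 ∧ ∃ l, ∃ k ∈ f l, k.val ≠ 0).card =
      p ^ Fintype.card L - 1 := by
  have herase : (Finset.univ.filter fun f : L → Finset (Fin p) =>
      (fun l => (f l).card) = 1 ∧ ∃ l, ∃ k ∈ f l, k.val ≠ 0) =
      (Finset.univ.filter fun f : L → Finset (Fin p) => (fun l => (f l).card) = 1).erase
        fun _ => {⟨0, hp⟩} := by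
    ext f
    simp only [Finset.mem_filter, Finset.mem_univ, true_and, Finset.mem_erase]
    rw [and_comm]
    refine and_congr_left fun h => ?_
    choose g hg using fun l => Finset.card_eq_one.mp (congrFun h l)
    simp only [hg, Finset.mem_singleton, exists_eq_left]
    simp [funext_iff, hg, Fin.ext_iff]
  rw [herase, Finset.card_erase_of_mem (by simp [funext_iff]), card_filter_profile]
  simp

theorem card_filter_or_of_disjoint {α : Type*} [Fintype α] {P Q : α → Prop}
    {_ : DecidablePred fun a => P a ∨ Q a} [DecidablePred P] [DecidablePred Q]
    (h : ∀ a, P a → ¬ Q a) :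
    (Finset.univ.filter fun a => P a ∨ Q a).card =
      (Finset.univ.filter P).card + (Finset.univ.filter Q).card := by
  classical
  rw [← Finset.card_union_of_disjoint (Finset.disjoint_filter.mpr fun a _ => h a)]
  congr 1
  ext a
  simp

theorem qbjni_eq {r : ℕ} (hr : 2 ≤ r) {p : ℕ} (hp : 0 < p) :
    qbjni r p = p ^ (r - 1) - 1 + (r - 1) * (r - 2) * (p.choose 2 * p ^ (r - 3)) := by
  have hL := card_nonzero_fin hr
  have := natCard_bases hr p ∅ {()} (fun s => qrpI r p ∉ s ∧ qrpJ r p ∈ s)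
    (fun f => ((fun l => (f l).card) = 1 ∧ ∃ l, ∃ k ∈ f l, k.val ≠ 0) ∨
      ∃ x ∈ Finset.univ.offDiag, (fun l => (f l).card) =
        Function.update (Function.update (1 : {l : Fin r // l.val ≠ 0} → ℕ) x.1 2) x.2 0)
    (by simp [qrpI, qrpJ]) (fun f => by
      simp only [Finset.card_singleton, Finset.card_empty, Finset.mem_singleton,
        Finset.notMem_empty]
      constructor
      · intro h
        have hsum : ∑ l, (f l).card = Fintype.card {l : Fin r // l.val ≠ 0} := by
          obtain ⟨h, -⟩ | ⟨⟨l₀, l₁⟩, hx, h⟩ := h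
          · simp [fun l => congrFun h l]
          · have hl : l₁ ≠ l₀ := by simpa [eq_comm] using hx
            have hf : ∑ l, (f l).card =
                ∑ l, Function.update
                  (Function.update (1 : {l : Fin r // l.val ≠ 0} → ℕ) l₀ 2) l₁ 0 l :=
              Finset.sum_congr rfl fun l _ => congrFun h l
            have h1 := sum_update_add (1 : {l : Fin r // l.val ≠ 0} → ℕ) l₀ 2
            have h2 := sum_update_add
              (Function.update (1 : {l : Fin r // l.val ≠ 0} → ℕ) l₀ 2) l₁ 0
            rw [Function.update_of_ne hl] at h2
            simp only [Pi.one_apply, Finset.sum_const, Finset.card_univ,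
              smul_eq_mul] at h1 h2
            omega
        exact ⟨by clear h; omega, (separates_false_true_iff hsum).mpr h⟩
      · rintro ⟨hc, h⟩
        have hsum : ∑ l, (f l).card = Fintype.card {l : Fin r // l.val ≠ 0} := by omega
        exact (separates_false_true_iff hsum).mp h)
  rw [qbjni, this, card_filter_or_of_disjoint, card_filter_profile_one_ne_zero hp, hL,
    card_filter_of_iff_exists_profile update_update_injOn _ fun _ => Iff.rfl]
  · congr 1
    rw [Finset.sum_congr rfl fun x hx => prod_choose_update_update _
      (Finset.mem_offDiag.mp hx).2.2 2 0, Finset.sum_const, Finset.offDiag_card,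
      Finset.card_univ, hL, ← Nat.mul_sub_one]
    simp [Nat.sub_sub]
  · rintro f ⟨h, -⟩ ⟨x, -, hx⟩
    simpa using congrFun (h.symm.trans hx) x.2

theorem tendsto_alpha_ratio (n : ℕ) :
    Filter.Tendsto (fun u : ℝ => ((n : ℝ) + 1) ^ 2 * (1 - u) /
        (2 * (1 - u ^ (n + 1)) + (n + 1) * n * (1 - u)))
      (nhds 0) (nhds (((n : ℝ) + 1) ^ 2 / (2 + (n + 1) * n))) := by
  have h : ContinuousAt (fun u : ℝ => ((n : ℝ) + 1) ^ 2 * (1 - u) /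
        (2 * (1 - u ^ (n + 1)) + (n + 1) * n * (1 - u))) 0 := by
    refine ContinuousAt.div (by fun_prop) (by fun_prop) ?_
    simp only [ne_eq, Nat.add_eq_zero_iff, one_ne_zero, and_false, not_false_eq_true, zero_pow,
      sub_zero, mul_one]
    positivity
  simpa [ContinuousAt] using h

/-- For `r ≥ 2` and any prime `p`, the basis counts of the rational configuration of
the vectors `e₁`, `v = e₂ + ⋯ + e_r`, `v_{k,ℓ} = k·e₁ + e_ℓ` (`2 ≤ ℓ ≤ r`,
`0 ≤ k < p`) in `ℚ^r` are `b_{ij} = (r−1)·p^(r−2)`,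
`b^{ij} = (r−1)·((p−1)/2)·p^(r−1)`, `b_i^j = p^(r−1)` and
`b_j^i = p^(r−1) − 1 + (r−1)·(r−2)·((p−1)/2)·p^(r−2)`; consequently the α-ratio
`(b^{ij}·b_{ij})/(b_i^j·b_j^i)` converges to `(r−1)²/(2 + (r−1)·(r−2))` as `p → ∞`. -/
theorem stmt17 (r : ℕ) (hr : 2 ≤ r) :
    (∀ p : ℕ, p.Prime →
      (qbij r p : ℚ) = ((r : ℚ) - 1) * (p : ℚ) ^ (r - 2) ∧
      (qbnij r p : ℚ) = ((r : ℚ) - 1) * (((p : ℚ) - 1) / 2) * (p : ℚ) ^ (r - 1) ∧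
      (qbinj r p : ℚ) = (p : ℚ) ^ (r - 1) ∧
      (qbjni r p : ℚ) = (p : ℚ) ^ (r - 1) - 1 +
        ((r : ℚ) - 1) * ((r : ℚ) - 2) * (((p : ℚ) - 1) / 2) * (p : ℚ) ^ (r - 2)) ∧
    Filter.Tendsto
      (fun p : ℕ => ((qbnij r p : ℝ) * (qbij r p : ℝ)) /
        ((qbinj r p : ℝ) * (qbjni r p : ℝ)))
      (Filter.atTop ⊓ Filter.principal {p : ℕ | p.Prime})
      (nhds (((r : ℝ) - 1) ^ 2 / (2 + ((r : ℝ) - 1) * ((r : ℝ) - 2)))) := by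
  have hcounts (p : ℕ) (hp : p.Prime) :
      (qbij r p : ℚ) = ((r : ℚ) - 1) * (p : ℚ) ^ (r - 2) ∧
      (qbnij r p : ℚ) = ((r : ℚ) - 1) * (((p : ℚ) - 1) / 2) * (p : ℚ) ^ (r - 1) ∧
      (qbinj r p : ℚ) = (p : ℚ) ^ (r - 1) ∧
      (qbjni r p : ℚ) = (p : ℚ) ^ (r - 1) - 1 +
        ((r : ℚ) - 1) * ((r : ℚ) - 2) * (((p : ℚ) - 1) / 2) * (p : ℚ) ^ (r - 2) := by
    rw [qbij_eq hr, qbnij_eq hr, qbinj_eq hr, qbjni_eq hr hp.pos]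
    have h1 : ((r - 1 : ℕ) : ℚ) = r - 1 := by push_cast [show 1 ≤ r by omega]; rfl
    have h2 : ((r - 2 : ℕ) : ℚ) = r - 2 := by push_cast [hr]; rfl
    have hpow : ((p ^ (r - 1) - 1 : ℕ) : ℚ) = p ^ (r - 1) - 1 := by
      push_cast [Nat.one_le_pow _ _ hp.pos]; rfl
    have hsucc : (p : ℚ) ^ (r - 1) = p * p ^ (r - 2) := by
      rw [← pow_succ']; congr 1; omega
    refine ⟨by push_cast [h1]; rfl, ?_, by push_cast; rfl, ?_⟩
    · rw [hsucc]
      push_cast [h1, Nat.cast_choose_two]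
      ring
    · rw [Nat.cast_add, hpow]
      push_cast [h1, h2, Nat.cast_choose_two]
      obtain rfl | hr' := hr.eq_or_lt
      · norm_num
      · have hsucc' : (p : ℚ) ^ (r - 2) = p * p ^ (r - 3) := by
          rw [← pow_succ']; congr 1; omega
        rw [hsucc']
        ring
  refine ⟨hcounts, ?_⟩
  obtain ⟨n, rfl⟩ : ∃ n, r = n + 2 := ⟨r - 2, by omega⟩
  have hu : Filter.Tendsto (fun p : ℕ => ((p : ℝ))⁻¹)
      (Filter.atTop ⊓ Filter.principal {p : ℕ | p.Prime}) (nhds 0) :=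
    tendsto_inv_atTop_nhds_zero_nat.mono_left inf_le_left
  have hlim := (tendsto_alpha_ratio n).comp hu
  have hvalue : (((n + 2 : ℕ) : ℝ) - 1) ^ 2 /
      (2 + (((n + 2 : ℕ) : ℝ) - 1) * (((n + 2 : ℕ) : ℝ) - 2)) =
      ((n : ℝ) + 1) ^ 2 / (2 + (n + 1) * n) := by
    push_cast; ring_nf
  rw [hvalue]
  refine hlim.congr' ?_
  filter_upwards [Filter.mem_inf_of_right (Filter.mem_principal_self _)] with p hp
  obtain ⟨h1, h2, h3, h4⟩ := hcounts p hp
  have hp0 : (p : ℝ) ≠ 0 := by exact_mod_cast hp.ne_zero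
  have h1 : (qbij (n + 2) p : ℝ) = ((n : ℝ) + 2 - 1) * p ^ n := by
    simpa using congrArg (Rat.cast : ℚ → ℝ) h1
  have h2 : (qbnij (n + 2) p : ℝ) = ((n : ℝ) + 2 - 1) * (((p : ℝ) - 1) / 2) * p ^ (n + 1) := by
    simpa using congrArg (Rat.cast : ℚ → ℝ) h2
  have h3 : (qbinj (n + 2) p : ℝ) = p ^ (n + 1) := by
    simpa using congrArg (Rat.cast : ℚ → ℝ) h3
  have h4 : (qbjni (n + 2) p : ℝ) = (p : ℝ) ^ (n + 1) - 1 +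
      ((n : ℝ) + 2 - 1) * n * (((p : ℝ) - 1) / 2) * p ^ n := by
    simpa using congrArg (Rat.cast : ℚ → ℝ) h4
  have hX : (p : ℝ) ^ (2 * n + 2) / 2 ≠ 0 := by positivity
  rw [h1, h2, h3, h4, Function.comp_apply, inv_pow, ← mul_div_mul_right _ _ hX]
  congr 1
  · field_simp
    ring
  · field_simp
    ring
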